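/- Let n be a natural number and let a, c be real numbers such that (c−1)_{n+1} ≠ 0. Then ∑_{k=0}^{n} (−1)^k · binom(n,k) · (a)_k (a)_{n−k} / ((c)_k (c−1)_{n−k}) equals (n!/(c−1)_{n+1}) · [(a)_{⌊n/2⌋} (c−a)_{⌊n/2⌋} / ((1)_{⌊n/2⌋} (c)_{⌊n/2⌋})] multiplied by (c + (n−2)/2) when n is even, and by (a + (n−1)/2) when n is odd. -/

import Mathlib

/-- Real Pochhammer symbol: `(x)_0 = 1`, `(x)_n = x(x+1)⋯(x+n-1)`. -/
def poch (x : ℝ) (n : ℕ) : ℝ := ∏ i ∈ Finset.range n, (x + i)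

open Finset in
lemma aux_rec (f : ℕ → ℝ) (a c : ℝ) (n : ℕ)
    (hf : ∀ k ≤ n, ((k : ℝ) + 1) * (k + c) * f (k + 1) = (k + a) * f k)
    (S : ℕ → (ℕ → ℕ → ℝ) → ℝ)
    (hS : ∀ m w, S m w = ∑ p ∈ antidiagonal m, w p.1 p.2 * (f p.1 * ((-1) ^ p.2 * f p.2))) :
    ((n + c) * S (n + 1) (fun i _ => i) - S (n + 1) (fun i j => i * j)
      = S n (fun i _ => i) + a * S n (fun _ _ => 1)) ∧
    ((n + c) * S (n + 1) (fun _ j => j) - S (n + 1) (fun i j => i * j)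
      = - S n (fun _ j => j) - a * S n (fun _ _ => 1)) ∧
    ((n - 1 + 2 * c) * S (n + 1) (fun i j => i * j)
      = a * (S n (fun _ j => j) - S n (fun i _ => i))) := by
  have key1 : ∀ w : ℕ → ℝ, ∑ p ∈ antidiagonal (n + 1),
      w p.2 * (p.1 * (p.1 - 1 + c)) * (f p.1 * ((-1) ^ p.2 * f p.2))
      = ∑ p ∈ antidiagonal n, w p.2 * (p.1 + a) * (f p.1 * ((-1) ^ p.2 * f p.2)) := by
    intro w
    rw [Finset.Nat.sum_antidiagonal_succ]
    simp only [Nat.cast_zero, zero_mul, mul_zero, zero_add]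
    refine sum_congr rfl fun p hp => ?_
    have h := hf p.1 (by have := mem_antidiagonal.1 hp; omega)
    push_cast
    linear_combination (w p.2 * ((-1) ^ p.2 * f p.2)) * h
  have key2 : ∀ w : ℕ → ℝ, ∑ p ∈ antidiagonal (n + 1),
      w p.1 * (p.2 * (p.2 - 1 + c)) * (f p.1 * ((-1) ^ p.2 * f p.2))
      = - ∑ p ∈ antidiagonal n, w p.1 * (p.2 + a) * (f p.1 * ((-1) ^ p.2 * f p.2)) := by
    intro w
    rw [Finset.Nat.sum_antidiagonal_succ', ← sum_neg_distrib]
    simp only [Nat.cast_zero, zero_mul, mul_zero, zero_add, add_zero]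
    refine sum_congr rfl fun p hp => ?_
    have h := hf p.2 (by have := mem_antidiagonal.1 hp; omega)
    push_cast
    rw [pow_succ]
    linear_combination (-(w p.1 * ((-1) ^ p.2 * f p.1))) * h
  have hsum : ∀ p ∈ antidiagonal (n + 1), (p.1 : ℝ) + p.2 = n + 1 := by
    intro p hp
    exact_mod_cast mem_antidiagonal.1 hp
  refine ⟨?_, ?_, ?_⟩
  · have e := key1 (fun _ => 1)
    simp only [hS, mul_sum, ← sum_add_distrib, ← sum_sub_distrib]
    trans
    swap
    · refine e.trans (sum_congr rfl fun p _ => ?_)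
      ring
    · refine sum_congr rfl fun p hp => ?_
      have h := hsum p hp
      linear_combination (-(p.1 : ℝ) * (f p.1 * ((-1) ^ p.2 * f p.2))) * h
  · have e := key2 (fun _ => 1)
    simp only [hS, mul_sum, ← sum_add_distrib, ← sum_sub_distrib, ← sum_neg_distrib] at e ⊢
    trans
    swap
    · refine e.trans (sum_congr rfl fun p _ => ?_)
      ring
    · refine sum_congr rfl fun p hp => ?_
      have h := hsum p hp
      linear_combination (-(p.2 : ℝ) * (f p.1 * ((-1) ^ p.2 * f p.2))) * h
  · have e := congrArg₂ (· + ·) (key1 (fun j => j)) (key2 (fun j => j))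
    simp only [hS, mul_sum, ← sum_add_distrib, ← sum_sub_distrib, ← sum_neg_distrib] at e ⊢
    trans
    swap
    · refine e.trans (sum_congr rfl fun p _ => ?_)
      ring
    · refine sum_congr rfl fun p hp => ?_
      have h := hsum p hp
      linear_combination (-(p.1 : ℝ) * p.2 * (f p.1 * ((-1) ^ p.2 * f p.2))) * h

open Finset in
lemma aux_rec2 (f : ℕ → ℝ) (a c : ℝ) (n : ℕ)
    (hf : ∀ k ≤ n, ((k : ℝ) + 1) * (k + c) * f (k + 1) = (k + a) * f k)
    (H D : ℕ → ℝ)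
    (hH : ∀ m, H m = ∑ p ∈ antidiagonal m, (f p.1 * ((-1) ^ p.2 * f p.2)))
    (hD : ∀ m, D m = ∑ p ∈ antidiagonal m, ((p.1 : ℝ) - p.2) * (f p.1 * ((-1) ^ p.2 * f p.2))) :
    (n + c) * D (n + 1) = (n + 2 * a) * H n ∧
    (n - 1 + 2 * c) * ((n + 1) * (n + c) * H (n + 1)) = (n - 1 + 2 * c - 2 * a) * D n := by
  obtain ⟨h1, h2, h3⟩ := aux_rec f a c n hf
    (fun m w => ∑ p ∈ antidiagonal m, w p.1 p.2 * (f p.1 * ((-1) ^ p.2 * f p.2))) (fun _ _ => rfl)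
  have hd : ∀ m, D m = ∑ p ∈ antidiagonal m, (p.1 : ℝ) * (f p.1 * ((-1) ^ p.2 * f p.2))
      - ∑ p ∈ antidiagonal m, (p.2 : ℝ) * (f p.1 * ((-1) ^ p.2 * f p.2)) := by
    intro m
    rw [hD, ← sum_sub_distrib]
    exact sum_congr rfl fun p _ => by ring
  have hh : ∀ m : ℕ, (m : ℝ) * H m = ∑ p ∈ antidiagonal m, (p.1 : ℝ) * (f p.1 * ((-1) ^ p.2 * f p.2))
      + ∑ p ∈ antidiagonal m, (p.2 : ℝ) * (f p.1 * ((-1) ^ p.2 * f p.2)) := by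
    intro m
    rw [hH, ← sum_add_distrib, mul_sum]
    refine sum_congr rfl fun p hp => ?_
    have : (p.1 : ℝ) + p.2 = m := by exact_mod_cast mem_antidiagonal.1 hp
    rw [← this]; ring
  have d0 := hd n
  have d1 := hd (n + 1)
  have g0 := hh n
  have g1 := hh (n + 1)
  have e0 := hH n
  simp only [one_mul] at h1 h2 h3
  rw [← e0] at h1 h2
  push_cast at g1
  constructor
  · linear_combination (n + c) * d1 + h1 - h2 - g0
  · linear_combination (n - 1 + 2 * c) * (n + c) * g1 + (n - 1 + 2 * c) * (h1 + h2) + 2 * h3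
      - (n - 1 + 2 * c - 2 * a) * d0

open Finset in
lemma aux_odd (f : ℕ → ℝ) (n : ℕ) (hn : Odd n) :
    ∑ p ∈ antidiagonal n, (f p.1 * ((-1 : ℝ) ^ p.2 * f p.2)) = 0 := by
  have h : ∑ p ∈ antidiagonal n, (f p.1 * ((-1 : ℝ) ^ p.2 * f p.2))
      = - ∑ p ∈ antidiagonal n, (f p.1 * ((-1 : ℝ) ^ p.2 * f p.2)) := by
    conv_lhs => rw [← Finset.Nat.sum_antidiagonal_swap]
    rw [← sum_neg_distrib]
    refine sum_congr rfl fun p hp => ?_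
    have hp' := mem_antidiagonal.1 hp
    have : (-1 : ℝ) ^ p.1 = - (-1 : ℝ) ^ p.2 := by
      have h1 : (-1 : ℝ) ^ p.1 * (-1 : ℝ) ^ p.2 = -1 := by
        rw [← pow_add, hp', hn.neg_one_pow]
      have h2 : (-1 : ℝ) ^ p.2 * (-1 : ℝ) ^ p.2 = 1 := by
        rw [← mul_pow]; simp
      linear_combination (-1 : ℝ) ^ p.2 * h1 - (-1 : ℝ) ^ p.1 * h2
    simp only [Prod.fst_swap, Prod.snd_swap]
    rw [this]; ring
  linarith

lemma poch_s (x : ℝ) (n : ℕ) : poch x (n + 1) = poch x n * (x + n) := by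
  simp [poch, Finset.prod_range_succ]

lemma poch_l (x : ℝ) (n : ℕ) : poch (x - 1) (n + 1) = (x - 1) * poch x n := by
  unfold poch
  rw [Finset.prod_range_succ', mul_comm]
  congr 1
  · simp
  · refine Finset.prod_congr rfl fun i _ => ?_
    push_cast; ring

lemma poch_ne {x : ℝ} {n m : ℕ} (h : m ≤ n) (hn : ∀ k < n, (k : ℝ) + x ≠ 0) : poch x m ≠ 0 := by
  refine Finset.prod_ne_zero_iff.2 fun i hi => ?_
  rw [add_comm]
  exact hn i (lt_of_lt_of_le (Finset.mem_range.1 hi) h)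

lemma poch_one_ne (m : ℕ) : poch 1 m ≠ 0 :=
  Finset.prod_ne_zero_iff.2 fun i _ => by positivity

lemma aux_f (a c : ℝ) (k : ℕ) (hk : poch c (k + 1) ≠ 0) :
    ((k : ℝ) + 1) * (k + c) * (poch a (k + 1) / (poch c (k + 1) * ((k + 1).factorial : ℝ)))
      = (k + a) * (poch a k / (poch c k * (k.factorial : ℝ))) := by
  rw [poch_s] at hk
  obtain ⟨h1, h2⟩ := mul_ne_zero_iff.1 hk
  have h3 : (k.factorial : ℝ) ≠ 0 := by positivity
  have h4 : (k : ℝ) + 1 ≠ 0 := by positivity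
  rw [poch_s, poch_s, Nat.factorial_succ]
  push_cast
  field_simp
  ring

open Finset in
lemma aux_even (a c : ℝ) (H : ℕ → ℝ)
    (hH : ∀ m, H m = ∑ p ∈ antidiagonal m, ((poch a p.1 / (poch c p.1 * (p.1.factorial : ℝ))) *
      ((-1) ^ p.2 * (poch a p.2 / (poch c p.2 * (p.2.factorial : ℝ)))))) (m : ℕ)
    (hc : ∀ k < 2 * m, (k : ℝ) + c ≠ 0) :
    H (2 * m) = poch a m * poch (c - a) m / (poch 1 m * poch c m * poch c (2 * m)) := by
  induction m with
  | zero => simp [hH, poch]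
  | succ m ih =>
    have ih := ih fun k hk => hc k (by omega)
    have hf : ∀ k ≤ 2 * m + 1, ((k : ℝ) + 1) * (k + c) *
        (poch a (k + 1) / (poch c (k + 1) * ((k + 1).factorial : ℝ)))
        = (k + a) * (poch a k / (poch c k * (k.factorial : ℝ))) := fun k hk =>
      aux_f a c k (poch_ne (n := 2 * (m + 1)) (by omega) hc)
    have r1 := (aux_rec2 (fun k => poch a k / (poch c k * (k.factorial : ℝ))) a c (2 * m)
      (fun k hk => hf k (by omega)) H _ hH (fun _ => rfl)).1
    have r2 := (aux_rec2 (fun k => poch a k / (poch c k * (k.factorial : ℝ))) a c (2 * m + 1)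
      hf H _ hH (fun _ => rfl)).2
    have n1 := hc m (by omega)
    have n2 := hc (2 * m) (by omega)
    have n3 := hc (2 * m + 1) (by omega)
    have p1 : poch c m ≠ 0 := poch_ne (n := 2 * (m + 1)) (by omega) hc
    have p2 : poch c (2 * m) ≠ 0 := poch_ne (n := 2 * (m + 1)) (by omega) hc
    have p3 := poch_one_ne m
    have n4 : (m : ℝ) + 1 ≠ 0 := by positivity
    rw [show 2 * (m + 1) = 2 * m + 1 + 1 by ring]
    generalize (∑ p ∈ antidiagonal (2 * m + 1), _ : ℝ) = D at r1 r2
    rw [ih] at r1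
    push_cast at *
    have hD : D = (2 * m + 2 * a) * (poch a m * poch (c - a) m / (poch 1 m * poch c m * poch c (2 * m))) / (2 * m + c) := by
      rw [eq_div_iff n2, ← r1]; ring
    have hX : H (2 * m + 1 + 1) = (2 * m + 2 * c - 2 * a) * D / ((2 * m + 2 * c) * ((2 * m + 2) * (2 * m + 1 + c))) := by
      have : (2 * (m : ℝ) + 2 * c) * ((2 * m + 2) * (2 * m + 1 + c)) ≠ 0 := by
        refine mul_ne_zero ?_ (mul_ne_zero (by positivity) n3)
        rw [← mul_add]; exact mul_ne_zero two_ne_zero n1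
      rw [eq_div_iff this]
      linear_combination r2
    rw [hX, hD]
    simp only [poch_s]
    push_cast
    have q1 : c + (m : ℝ) ≠ 0 := by rwa [add_comm]
    have q2 : c + 2 * (m : ℝ) ≠ 0 := by rwa [add_comm]
    have q3 : c + (2 * (m : ℝ) + 1) ≠ 0 := by rwa [add_comm]
    have q4 : (1 : ℝ) + m ≠ 0 := by rwa [add_comm]
    rw [show 2 * (m : ℝ) + 2 * c = 2 * (c + m) by ring, show 2 * (m : ℝ) + 2 = 2 * (1 + m) by ring,
      show 2 * (m : ℝ) + 1 + c = c + (2 * m + 1) by ring, show 2 * (m : ℝ) + c = c + 2 * m by ring]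
    field_simp
    ring

/-- Proposition 7: binomial convolution formula extracted from the variant
product formula for `₁F₁(a; c-1; x) · ₁F₁(a; c; -x)`. -/
theorem stmt_11 (n : ℕ) (a c : ℝ) (hc : poch (c - 1) (n + 1) ≠ 0) :
    ∑ k ∈ Finset.range (n + 1),
        (-1 : ℝ) ^ k * (n.choose k : ℝ) * (poch a k * poch a (n - k)) /
          (poch c k * poch (c - 1) (n - k))
      = ((n.factorial : ℝ) / poch (c - 1) (n + 1)) *
          (poch a (n / 2) * poch (c - a) (n / 2) / (poch 1 (n / 2) * poch c (n / 2))) *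
          (if Even n then c + ((n : ℝ) - 2) / 2 else a + ((n : ℝ) - 1) / 2) := by
  rw [poch_l] at hc
  obtain ⟨hc1, hcn⟩ := mul_ne_zero_iff.1 hc
  have hk : ∀ k < n, (k : ℝ) + c ≠ 0 := by
    intro k hk
    rw [add_comm]
    exact Finset.prod_ne_zero_iff.1 hcn k (Finset.mem_range.2 hk)
  set f : ℕ → ℝ := fun k => poch a k / (poch c k * (k.factorial : ℝ)) with hfdef
  obtain ⟨H, hH⟩ : ∃ H : ℕ → ℝ, ∀ m, H m = ∑ p ∈ Finset.HasAntidiagonal.antidiagonal m,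
    (f p.1 * ((-1) ^ p.2 * f p.2)) := ⟨_, fun _ => rfl⟩
  obtain ⟨D, hD⟩ : ∃ D : ℕ → ℝ, ∀ m, D m = ∑ p ∈ Finset.HasAntidiagonal.antidiagonal m,
    ((p.1 : ℝ) - p.2) * (f p.1 * ((-1) ^ p.2 * f p.2)) := ⟨_, fun _ => rfl⟩
  have hS : ∑ k ∈ Finset.range (n + 1),
        (-1 : ℝ) ^ k * (n.choose k : ℝ) * (poch a k * poch a (n - k)) /
          (poch c k * poch (c - 1) (n - k))
      = n.factorial / (c - 1) * ((c - 1 + n / 2) * H n + D n / 2) := by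
    rw [← Finset.Nat.sum_antidiagonal_eq_sum_range_succ (fun k l => (-1 : ℝ) ^ k * (n.choose k : ℝ) *
      (poch a k * poch a l) / (poch c k * poch (c - 1) l)), ← Finset.Nat.sum_antidiagonal_swap,
      hH, hD, Finset.mul_sum, Finset.sum_div, ← Finset.sum_add_distrib, Finset.mul_sum]
    refine Finset.sum_congr rfl fun p hp => ?_
    obtain ⟨i, j⟩ := p
    have hp' : i + j = n := Finset.HasAntidiagonal.mem_antidiagonal.1 hp
    simp only [Prod.fst_swap, Prod.snd_swap, hfdef]
    have hi : poch c i ≠ 0 := poch_ne (by omega) hk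
    have hj : poch c j ≠ 0 := poch_ne (by omega) hk
    have e : poch (c - 1) i * (c - 1 + i) = (c - 1) * poch c i := by rw [← poch_s, poch_l]
    have hi' : poch (c - 1) i ≠ 0 := by
      intro h0
      rw [h0, zero_mul] at e
      exact mul_ne_zero hc1 hi e.symm
    have e' : (n.choose j : ℝ) = n.factorial / (i.factorial * j.factorial) := by
      subst hp'
      rw [eq_div_iff (by positivity)]
      have := Nat.add_choose_mul_factorial_mul_factorial i j
      rw [← this]; push_cast; ring
    have e2 : (n : ℝ) = i + j := by rw [← hp']; push_cast; ring
    have e3 : (1 : ℝ) / poch (c - 1) i = (c - 1 + i) / ((c - 1) * poch c i) := by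
      rw [← e]
      have : c - 1 + (i : ℝ) ≠ 0 := by
        intro h0
        rw [h0, mul_zero] at e
        exact mul_ne_zero hc1 hi e.symm
      field_simp
    rw [e']
    trans ((-1) ^ j * ((n.factorial : ℝ) / (i.factorial * j.factorial)) * (poch a j * poch a i) /
      poch c j) * (1 / poch (c - 1) i)
    · field_simp
    rw [e3, e2]
    have f1 : (i.factorial : ℝ) ≠ 0 := by positivity
    have f2 : (j.factorial : ℝ) ≠ 0 := by positivity
    field_simp
    ring
  rw [hS, poch_l]
  have hD1 : ∀ m, m + 1 ≤ n → (m + c) * D (m + 1) = (m + 2 * a) * H m := fun m hm =>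
    (aux_rec2 f a c m (fun k hkm => aux_f a c k (poch_ne (by omega) hk)) H D hH hD).1
  have hE : H (2 * (n / 2)) = _ := aux_even a c H hH (n / 2) fun k hk' => hk k (by omega)
  have p3 := poch_one_ne (n / 2)
  have p1 : poch c (n / 2) ≠ 0 := poch_ne (by omega) hk
  rcases Nat.even_or_odd n with he | ho
  · have h2 : 2 * (n / 2) = n := Nat.two_mul_div_two_of_even he
    have hD0 : D n = 0 := by
      rcases Nat.eq_zero_or_pos n with h0 | hpos
      · rw [h0, hD]; simp
      · obtain ⟨m, rfl⟩ : ∃ m, n = m + 1 := ⟨n - 1, by omega⟩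
        have hm : Odd m := by
          rcases Nat.even_or_odd m with h | h
          · exact absurd he (by simpa [Nat.even_add_one] using h)
          · exact h
        have := hD1 m le_rfl
        rw [hH m, aux_odd f m hm, mul_zero] at this
        exact (mul_eq_zero.1 this).resolve_left (hk m (by omega))
    rw [if_pos he, hD0]
    rw [h2] at hE
    rw [hE]
    field_simp
    ring
  · have h2 : 2 * (n / 2) + 1 = n := Nat.two_mul_div_two_add_one_of_odd ho
    have hH0 : H n = 0 := by rw [hH, aux_odd f n ho]
    rw [if_neg (Nat.not_even_iff_odd.2 ho), hH0]
    generalize n / 2 = m at *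
    subst h2
    have hd := hD1 (2 * m) le_rfl
    rw [hE] at hd
    push_cast at hd
    have n2 := hk (2 * m) (by omega)
    push_cast at n2
    have p2 : poch c (2 * m) ≠ 0 := poch_ne (by omega) hk
    have hDv : D (2 * m + 1) = _ := eq_div_of_mul_eq n2 ((mul_comm _ _).trans hd)
    rw [hDv, poch_s]
    push_cast at *
    rw [show 2 * (m : ℝ) + c = c + 2 * m by ring]
    have q2 : c + 2 * (m : ℝ) ≠ 0 := by rwa [add_comm]
    field_simp
    ring
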